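/- There is an absolute constant c > 0 such that for every finite set P of points in ℝ^2 and every finite set L of lines in ℝ^2, the number of incidences satisfies I(P,L) ≤ c·( (|P||L|)^{2/3} + |P| + |L| ). -/

import Mathlib

/-!
The proof is Székely's crossing-number argument. After setting aside vertical lines, which account
for at most one incidence per point, join consecutive points of `P` on each line of `L`. This
straight-line drawing has at least `I(P, L) - |L|` edges, and two lines produce at most one
crossing.

A crossing-free straight-line drawing has at most `3 |V|` edges, which is proved by charging rather
than by Euler's formula. At most `|V|` edges are the lowest ones leaving their left endpoint, and at
most `|V|` are the lowest ones arriving at their right endpoint. If `e` is neither, let `f` be the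
edge just below `e` at its left endpoint: the leftmost vertex in the wedge between `f` and `e` sees
`e` vertically above it, and each vertex sees only one edge.

Deleting one edge per crossing gives `|E| ≤ 3 |V| + cr` for every drawing. Averaging this over the
subdrawings induced on random sets of vertices of density `p` gives
`p ^ 2 |E| ≤ 3 p |V| + p ^ 4 cr`, and `p = 6 |V| / |E|` turns it into the crossing lemma
`|E| ^ 3 ≤ 72 |V| ^ 2 cr`.
-/

open scoped Classical

noncomputable section

/-- A set `l ⊆ ℝ^2` is a line if it is the zero set of a nonzero affine-linear function. -/
def IsLineR (l : Set (Fin 2 → ℝ)) : Prop :=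
  ∃ a b c : ℝ, (a ≠ 0 ∨ b ≠ 0) ∧ l = {x | a * x 0 + b * x 1 + c = 0}

/-- The number of incidences between a finite set of points `P` and a finite set of lines `L`. -/
def incidencesR (P : Finset (Fin 2 → ℝ)) (L : Finset (Set (Fin 2 → ℝ))) : ℕ :=
  ((P ×ˢ L).filter fun z => z.1 ∈ z.2).card

open scoped Finset

/-! ### Incidences -/

section Incidences

variable {α β : Type*}

/-- The incidences between points `P` and blocks `L`, as a set of pairs. Blocks may be sets or
objects of any type with a membership relation, so that lines given by equations are covered. -/
def incidences [Membership α β] (P : Finset α) (L : Finset β) : Finset (α × β) :=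
  {z ∈ P ×ˢ L | z.1 ∈ z.2}

lemma mem_incidences [Membership α β] {P : Finset α} {L : Finset β} {z : α × β} :
    z ∈ incidences P L ↔ z.1 ∈ P ∧ z.2 ∈ L ∧ z.1 ∈ z.2 := by
  simp [incidences, and_assoc]

lemma card_incidences_union_le [Membership α β] (P : Finset α) (L₁ L₂ : Finset β) :
    #(incidences P (L₁ ∪ L₂)) ≤ #(incidences P L₁) + #(incidences P L₂) := by
  have hunion : incidences P (L₁ ∪ L₂) = incidences P L₁ ∪ incidences P L₂ := by
    simp only [incidences, Finset.product_union, Finset.filter_union]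
  exact hunion ▸ Finset.card_union_le _ _

lemma card_incidences_image_coe_le [SetLike β α] (P : Finset α) (L : Finset β) :
    #(incidences P (L.image ((↑) : β → Set α))) ≤ #(incidences P L) := by
  refine (Finset.card_le_card fun z hz => ?_).trans
    (Finset.card_image_le (f := Prod.map id ((↑) : β → Set α)))
  obtain ⟨hP, hL, hz⟩ := mem_incidences.1 hz
  obtain ⟨l, hl, hlz⟩ := Finset.mem_image.1 hL
  exact Finset.mem_image.2 ⟨(z.1, l), mem_incidences.2 ⟨hP, hl, by rwa [← hlz] at hz⟩,
    Prod.ext rfl hlz⟩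

lemma card_incidences_le_of_pairwiseDisjoint {P : Finset α} {L : Finset (Set α)}
    (hL : (L : Set (Set α)).PairwiseDisjoint id) : #(incidences P L) ≤ #P := by
  refine Finset.card_le_card_of_injOn Prod.fst (fun z hz => (mem_incidences.1 hz).1) ?_
  intro z hz w hw hzw
  obtain ⟨-, hzL, hz⟩ := mem_incidences.1 hz
  obtain ⟨-, hwL, hw⟩ := mem_incidences.1 hw
  exact Prod.ext hzw (hL.elim_set hzL hwL z.1 hz (hzw ▸ hw))

end Incidences

/-! ### Non-vertical lines -/

/-- The non-vertical line `y = slope * x + intercept` in the plane over `K`. -/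
@[ext]
structure NonverticalLine (K : Type*) where
  slope : K
  intercept : K

namespace NonverticalLine

variable {K : Type*} [Field K]

/-- The ordinate of the point of a line with abscissa `x`. -/
def height (l : NonverticalLine K) (x : K) : K :=
  l.slope * x + l.intercept

lemma eq_of_height_eq {l k : NonverticalLine K} {x y : K} (hxy : x ≠ y)
    (hx : l.height x = k.height x) (hy : l.height y = k.height y) : l = k := by
  simp only [height] at hx hy
  have hslope : l.slope = k.slope :=
    mul_right_cancel₀ (sub_ne_zero.2 hxy) (by linear_combination hx - hy)
  exact NonverticalLine.ext hslope (by linear_combination hx - x * hslope)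

instance : SetLike (NonverticalLine K) (Fin 2 → K) where
  coe l := {p | p 1 = l.height (p 0)}
  coe_injective l k h := by
    have hheight (x : K) : l.height x = k.height x :=
      (Set.ext_iff.1 h ![x, l.height x]).1 rfl
    exact eq_of_height_eq zero_ne_one (hheight 0) (hheight 1)

lemma mem_iff {l : NonverticalLine K} {p : Fin 2 → K} : p ∈ l ↔ p 1 = l.height (p 0) :=
  Iff.rfl

lemma eq_of_mem {l : NonverticalLine K} {p q : Fin 2 → K} (hp : p ∈ l) (hq : q ∈ l)
    (h : p 0 = q 0) : p = q :=
  funext <| Fin.forall_fin_two.2 ⟨h, by rw [mem_iff.1 hp, mem_iff.1 hq, h]⟩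

/-- The point of a line with abscissa `x`. -/
def pointAt (l : NonverticalLine K) (x : K) : Fin 2 → K :=
  ![x, l.height x]

@[simp]
lemma pointAt_one (l : NonverticalLine K) (x : K) : l.pointAt x 1 = l.height x :=
  rfl

lemma pointAt_mem (l : NonverticalLine K) (x : K) : l.pointAt x ∈ l :=
  rfl

lemma pointAt_apply_zero {l : NonverticalLine K} {p : Fin 2 → K} (hp : p ∈ l) :
    l.pointAt (p 0) = p :=
  eq_of_mem (l.pointAt_mem _) hp rfl

variable [LinearOrder K] [IsStrictOrderedRing K]

lemma height_lt_iff_slope_lt {l k : NonverticalLine K} {a x : K} (ha : l.height a = k.height a)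
    (hx : a < x) : l.height x < k.height x ↔ l.slope < k.slope := by
  have hdiff : k.height x - l.height x = (k.slope - l.slope) * (x - a) := by
    simp only [height] at ha ⊢
    linear_combination -ha
  rw [← sub_pos, hdiff, mul_pos_iff_of_pos_right (sub_pos.2 hx), sub_pos]

lemma height_lt_iff_slope_gt {l k : NonverticalLine K} {a x : K} (ha : l.height a = k.height a)
    (hx : x < a) : l.height x < k.height x ↔ k.slope < l.slope := by
  have hdiff : k.height x - l.height x = (l.slope - k.slope) * (a - x) := by
    simp only [height] at ha ⊢
    linear_combination -ha
  rw [← sub_pos, hdiff, mul_pos_iff_of_pos_right (sub_pos.2 hx), sub_pos]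

lemma exists_height_eq {l k : NonverticalLine K} {x y : K} (hxy : x < y)
    (hx : l.height x < k.height x) (hy : k.height y < l.height y) :
    ∃ z ∈ Set.Ioo x y, l.height z = k.height z := by
  simp only [height] at hx hy ⊢
  have hslope : 0 < l.slope - k.slope :=
    pos_of_mul_pos_left (b := y - x) (by linarith) (sub_pos.2 hxy).le
  refine ⟨(k.intercept - l.intercept) / (l.slope - k.slope), ⟨?_, ?_⟩, ?_⟩
  · rw [lt_div_iff₀ hslope]; linarith
  · rw [div_lt_iff₀ hslope]; linarith
  · field_simp [hslope.ne']; ring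

end NonverticalLine

/-! ### Segments and drawings -/

/-- A segment of the non-vertical line `line`, given by the abscissas `left` and `right` of its
endpoints. That `left < right` is part of `PlaneSegment.IsEdge`. -/
@[ext]
structure PlaneSegment (K : Type*) where
  line : NonverticalLine K
  left : K
  right : K

namespace PlaneSegment

variable {K : Type*} [Field K]

/-- The left endpoint of a segment. -/
def leftPoint (e : PlaneSegment K) : Fin 2 → K :=
  e.line.pointAt e.left

/-- The right endpoint of a segment. -/
def rightPoint (e : PlaneSegment K) : Fin 2 → K :=
  e.line.pointAt e.right

lemma left_eq_of_leftPoint_eq {e f : PlaneSegment K} (h : e.leftPoint = f.leftPoint) :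
    e.left = f.left :=
  congr_fun h 0

lemma right_eq_of_rightPoint_eq {e f : PlaneSegment K} (h : e.rightPoint = f.rightPoint) :
    e.right = f.right :=
  congr_fun h 0

lemma height_left_eq_of_leftPoint_eq {e f : PlaneSegment K} (h : e.leftPoint = f.leftPoint) :
    e.line.height e.left = f.line.height e.left :=
  (congr_fun h 1).trans (by rw [left_eq_of_leftPoint_eq h, leftPoint, NonverticalLine.pointAt_one])

lemma height_right_eq_of_rightPoint_eq {e f : PlaneSegment K} (h : e.rightPoint = f.rightPoint) :
    e.line.height e.right = f.line.height e.right :=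
  (congr_fun h 1).trans
    (by rw [right_eq_of_rightPoint_eq h, rightPoint, NonverticalLine.pointAt_one])

lemma line_eq_of_leftPoint_eq {e f : PlaneSegment K} (h : e.leftPoint = f.leftPoint)
    (hslope : e.line.slope = f.line.slope) : e.line = f.line := by
  have hheight := height_left_eq_of_leftPoint_eq h
  simp only [NonverticalLine.height, hslope, add_right_inj] at hheight
  exact NonverticalLine.ext hslope hheight

lemma line_eq_of_rightPoint_eq {e f : PlaneSegment K} (h : e.rightPoint = f.rightPoint)
    (hslope : e.line.slope = f.line.slope) : e.line = f.line := by
  have hheight := height_right_eq_of_rightPoint_eq h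
  simp only [NonverticalLine.height, hslope, add_right_inj] at hheight
  exact NonverticalLine.ext hslope hheight

/-- The set of endpoints of a segment. -/
def endpoints [DecidableEq K] (e : PlaneSegment K) : Finset (Fin 2 → K) :=
  {e.leftPoint, e.rightPoint}

lemma endpoints_subset_iff [DecidableEq K] {e : PlaneSegment K} {S : Finset (Fin 2 → K)} :
    e.endpoints ⊆ S ↔ e.leftPoint ∈ S ∧ e.rightPoint ∈ S := by
  simp [endpoints, Finset.insert_subset_iff]

lemma mem_line_of_mem_endpoints [DecidableEq K] {e : PlaneSegment K} {u : Fin 2 → K}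
    (hu : u ∈ e.endpoints) : u ∈ e.line := by
  obtain rfl | rfl : u = e.leftPoint ∨ u = e.rightPoint := by simpa [endpoints] using hu
  exacts [e.line.pointAt_mem _, e.line.pointAt_mem _]

variable [LinearOrder K]

lemma notMem_Ioo_of_mem_endpoints {e : PlaneSegment K} {u : Fin 2 → K} (hu : u ∈ e.endpoints) :
    u 0 ∉ Set.Ioo e.left e.right := by
  obtain rfl | rfl : u = e.leftPoint ∨ u = e.rightPoint := by simpa [endpoints] using hu
  exacts [fun h => lt_irrefl _ h.1, fun h => lt_irrefl _ h.2]

/-- `e` is an edge of a straight-line drawing with vertex set `V`: it is nondegenerate, its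
endpoints are vertices, and no vertex lies in its interior. Equivalently, it joins two consecutive
points of `V` on its line. -/
structure IsEdge (V : Finset (Fin 2 → K)) (e : PlaneSegment K) : Prop where
  left_lt_right : e.left < e.right
  leftPoint_mem : e.leftPoint ∈ V
  rightPoint_mem : e.rightPoint ∈ V
  notMem_Ioo : ∀ w ∈ V, w ∈ e.line → w 0 ∉ Set.Ioo e.left e.right

/-- Two distinct segments cross if their interiors meet. -/
def Crosses (e f : PlaneSegment K) : Prop :=
  e ≠ f ∧ ∃ x ∈ Set.Ioo e.left e.right ∩ Set.Ioo f.left f.right, e.line.height x = f.line.height x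

namespace IsEdge

variable {V S : Finset (Fin 2 → K)} {e f : PlaneSegment K}

lemma of_endpoints_subset (he : e.IsEdge V) (hSV : S ⊆ V) (hS : e.endpoints ⊆ S) :
    e.IsEdge S where
  left_lt_right := he.left_lt_right
  leftPoint_mem := (endpoints_subset_iff.1 hS).1
  rightPoint_mem := (endpoints_subset_iff.1 hS).2
  notMem_Ioo w hw := he.notMem_Ioo w (hSV hw)

lemma endpoints_subset (he : e.IsEdge V) : e.endpoints ⊆ V :=
  endpoints_subset_iff.2 ⟨he.leftPoint_mem, he.rightPoint_mem⟩

lemma card_endpoints (he : e.IsEdge V) : #e.endpoints = 2 :=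
  Finset.card_pair fun h => he.left_lt_right.ne (congr_fun h 0)

lemma left_le_left (he : e.IsEdge V) (hf : f.IsEdge V) (hline : e.line = f.line)
    (h : e.left < f.right) : e.left ≤ f.left :=
  not_lt.1 fun hlt =>
    hf.notMem_Ioo _ he.leftPoint_mem (hline ▸ e.line.pointAt_mem _) ⟨hlt, h⟩

lemma right_le_right (he : e.IsEdge V) (hf : f.IsEdge V) (hline : e.line = f.line)
    (h : e.left < f.right) : e.right ≤ f.right :=
  not_lt.1 fun hlt =>
    he.notMem_Ioo _ hf.rightPoint_mem (hline ▸ f.line.pointAt_mem _) ⟨h, hlt⟩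

lemma eq_of_line_eq (he : e.IsEdge V) (hf : f.IsEdge V) (hline : e.line = f.line)
    (hef : e.left < f.right) (hfe : f.left < e.right) : e = f :=
  PlaneSegment.ext hline
    (le_antisymm (he.left_le_left hf hline hef) (hf.left_le_left he hline.symm hfe))
    (le_antisymm (he.right_le_right hf hline hef) (hf.right_le_right he hline.symm hfe))

lemma leftPoint_eq_of_height_eq (he : e.IsEdge V) (hf : f.IsEdge V) (hle : f.left ≤ e.left)
    (hlt : e.left < f.right) (hheight : e.line.height e.left = f.line.height e.left) :
    f.leftPoint = e.leftPoint := by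
  have hleft : f.left = e.left := hle.eq_of_not_lt fun h =>
    hf.notMem_Ioo _ he.leftPoint_mem hheight ⟨h, hlt⟩
  rw [leftPoint, leftPoint, hleft, NonverticalLine.pointAt, NonverticalLine.pointAt, hheight]

end IsEdge

namespace Crosses

variable {V : Finset (Fin 2 → K)} {e f e' f' : PlaneSegment K}

lemma line_ne (h : e.Crosses f) (he : e.IsEdge V) (hf : f.IsEdge V) : e.line ≠ f.line := by
  obtain ⟨hne, x, ⟨hxe, hxf⟩, -⟩ := h
  exact fun hline =>
    hne (he.eq_of_line_eq hf hline (hxe.1.trans hxf.2) (hxf.1.trans hxe.2))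

lemma disjoint_endpoints (h : e.Crosses f) (he : e.IsEdge V) (hf : f.IsEdge V) :
    Disjoint e.endpoints f.endpoints := by
  obtain ⟨x, ⟨hxe, -⟩, hx⟩ := h.2
  refine Finset.disjoint_left.2 fun u hue huf => h.line_ne he hf ?_
  have hu : e.line.height (u 0) = f.line.height (u 0) :=
    (mem_line_of_mem_endpoints hue).symm.trans (mem_line_of_mem_endpoints huf)
  have hux : u 0 ≠ x := fun h => notMem_Ioo_of_mem_endpoints hue (h ▸ hxe)
  exact NonverticalLine.eq_of_height_eq hux hu hx

lemma card_endpoints_union (h : e.Crosses f) (he : e.IsEdge V) (hf : f.IsEdge V) :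
    #(e.endpoints ∪ f.endpoints) = 4 := by
  rw [Finset.card_union_of_disjoint (h.disjoint_endpoints he hf), he.card_endpoints,
    hf.card_endpoints]

lemma eq_of_line_eq (h : e.Crosses f) (h' : e'.Crosses f') (he : e.IsEdge V) (hf : f.IsEdge V)
    (he' : e'.IsEdge V) (hf' : f'.IsEdge V) (hee' : e.line = e'.line) (hff' : f.line = f'.line) :
    e = e' ∧ f = f' := by
  obtain ⟨x, ⟨hxe, hxf⟩, hx⟩ := h.2
  obtain ⟨y, ⟨hye, hyf⟩, hy⟩ := h'.2
  obtain rfl : x = y := by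
    by_contra hxy
    exact h.line_ne he hf (NonverticalLine.eq_of_height_eq hxy hx (by rw [hee', hff', hy]))
  exact ⟨he.eq_of_line_eq he' hee' (hxe.1.trans hye.2) (hye.1.trans hxe.2),
    hf.eq_of_line_eq hf' hff' (hxf.1.trans hyf.2) (hyf.1.trans hxf.2)⟩

end Crosses

lemma height_le_of_not_crosses [IsStrictOrderedRing K] {e f : PlaneSegment K}
    (hef : ¬ e.Crosses f) {x y : K}
    (hx : x ∈ Set.Icc e.left e.right ∩ Set.Icc f.left f.right)
    (hy : y ∈ Set.Icc e.left e.right ∩ Set.Icc f.left f.right)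
    (h : e.line.height x < f.line.height x) : e.line.height y ≤ f.line.height y := by
  by_contra! hlt
  have hne : e ≠ f := by rintro rfl; exact lt_irrefl _ h
  rcases lt_trichotomy x y with hxy | rfl | hxy
  · obtain ⟨z, hz, hzeq⟩ := NonverticalLine.exists_height_eq hxy h hlt
    exact hef ⟨hne, z, ⟨Set.Ioo_subset_Ioo hx.1.1 hy.1.2 hz, Set.Ioo_subset_Ioo hx.2.1 hy.2.2 hz⟩,
      hzeq⟩
  · exact h.asymm hlt
  · obtain ⟨z, hz, hzeq⟩ := NonverticalLine.exists_height_eq hxy hlt h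
    exact hef ⟨hne, z, ⟨Set.Ioo_subset_Ioo hy.1.1 hx.1.2 hz, Set.Ioo_subset_Ioo hy.2.1 hx.2.2 hz⟩,
      hzeq.symm⟩

end PlaneSegment

/-! ### Crossing-free drawings -/

section PlaneDrawing

variable {K : Type*} [Field K] [LinearOrder K] {V : Finset (Fin 2 → K)}
  {E : Finset (PlaneSegment K)}

lemma card_filter_lowest_left_le (hE : ∀ e ∈ E, e.IsEdge V) :
    #{e ∈ E | ∀ f ∈ E, f.leftPoint = e.leftPoint → e.line.slope ≤ f.line.slope} ≤ #V := by
  refine Finset.card_le_card_of_injOn PlaneSegment.leftPoint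
    (fun e he => (hE e (Finset.mem_filter.1 he).1).leftPoint_mem) ?_
  intro e he f hf hef
  obtain ⟨he, he_min⟩ := Finset.mem_filter.1 he
  obtain ⟨hf, hf_min⟩ := Finset.mem_filter.1 hf
  have hleft := PlaneSegment.left_eq_of_leftPoint_eq hef
  exact (hE e he).eq_of_line_eq (hE f hf)
    (PlaneSegment.line_eq_of_leftPoint_eq hef
      (le_antisymm (he_min f hf hef.symm) (hf_min e he hef)))
    (hleft ▸ (hE f hf).left_lt_right) (hleft ▸ (hE e he).left_lt_right)

lemma card_filter_lowest_right_le (hE : ∀ e ∈ E, e.IsEdge V) :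
    #{e ∈ E | ∀ f ∈ E, f.rightPoint = e.rightPoint → f.line.slope ≤ e.line.slope} ≤ #V := by
  refine Finset.card_le_card_of_injOn PlaneSegment.rightPoint
    (fun e he => (hE e (Finset.mem_filter.1 he).1).rightPoint_mem) ?_
  intro e he f hf hef
  obtain ⟨he, he_max⟩ := Finset.mem_filter.1 he
  obtain ⟨hf, hf_max⟩ := Finset.mem_filter.1 hf
  have hright := PlaneSegment.right_eq_of_rightPoint_eq hef
  exact (hE e he).eq_of_line_eq (hE f hf)
    (PlaneSegment.line_eq_of_rightPoint_eq hef
      (le_antisymm (hf_max e he hef) (he_max f hf hef.symm)))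
    (hright ▸ (hE e he).left_lt_right) (hright ▸ (hE f hf).left_lt_right)

/-- The segment `e` is the first one of `E` met by the vertical ray going up from the point `w`,
where a segment counts as met only if the ray passes through its interior. -/
structure IsFirstAbove (E : Finset (PlaneSegment K)) (w : Fin 2 → K) (e : PlaneSegment K) :
    Prop where
  mem_Ioo : w 0 ∈ Set.Ioo e.left e.right
  lt_height : w 1 < e.line.height (w 0)
  height_le : ∀ h ∈ E, w 0 ∈ Set.Ioo h.left h.right → w 1 < h.line.height (w 0) →
    e.line.height (w 0) ≤ h.line.height (w 0)

/-- A straight-line drawing of a plane graph with vertices `V` and edges `E`, none of them vertical: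
edges do not cross and do not pass through vertices. -/
structure IsPlaneDrawing (V : Finset (Fin 2 → K)) (E : Finset (PlaneSegment K)) : Prop where
  isEdge : ∀ e ∈ E, e.IsEdge V
  not_crosses : ∀ e ∈ E, ∀ f ∈ E, ¬ e.Crosses f

namespace IsPlaneDrawing

variable {e f g : PlaneSegment K}

lemma card_filter_isFirstAbove_le (G : IsPlaneDrawing V E) :
    #{e ∈ E | ∃ w ∈ V, IsFirstAbove E w e} ≤ #V := by
  refine Finset.card_le_card_of_forall_subsingleton (fun e w => IsFirstAbove E w e)
    (fun e he => (Finset.mem_filter.1 he).2) ?_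
  rintro w - e ⟨he, hwe⟩ f ⟨hf, hwf⟩
  have he := (Finset.mem_filter.1 he).1
  have hf := (Finset.mem_filter.1 hf).1
  by_contra hne
  exact G.not_crosses e he f hf ⟨hne, w 0, ⟨hwe.mem_Ioo, hwf.mem_Ioo⟩,
    le_antisymm (hwe.height_le f hf hwf.mem_Ioo hwf.lt_height)
      (hwf.height_le e he hwe.mem_Ioo hwe.lt_height)⟩

/-- The vertices strictly below the interior of `e` and on or above `f`, where `f` starts at the
left endpoint of `e`. -/
def wedge (V : Finset (Fin 2 → K)) (f e : PlaneSegment K) : Finset (Fin 2 → K) :=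
  {w ∈ V | w 0 ∈ Set.Ioo e.left e.right ∧ w 0 ≤ f.right ∧
    f.line.height (w 0) ≤ w 1 ∧ w 1 < e.line.height (w 0)}

variable [IsStrictOrderedRing K]

lemma wedge_nonempty (G : IsPlaneDrawing V E) (he : e ∈ E) (hf : f ∈ E) (hg : g ∈ E)
    (hfe : f.leftPoint = e.leftPoint) (hfe_slope : f.line.slope < e.line.slope)
    (hge : g.rightPoint = e.rightPoint) (hge_slope : e.line.slope < g.line.slope) :
    (wedge V f e).Nonempty := by
  have hfe_left := PlaneSegment.left_eq_of_leftPoint_eq hfe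
  have hge_right := PlaneSegment.right_eq_of_rightPoint_eq hge
  have he_lt := (G.isEdge e he).left_lt_right
  have hf_lt := (G.isEdge f hf).left_lt_right
  have hg_lt := (G.isEdge g hg).left_lt_right
  have hfe_height := PlaneSegment.height_left_eq_of_leftPoint_eq hfe
  have hge_height := PlaneSegment.height_right_eq_of_rightPoint_eq hge
  rw [hfe_left] at hfe_height hf_lt
  rw [hge_right] at hge_height hg_lt
  have hf_below {x : K} (hx : e.left < x) : f.line.height x < e.line.height x :=
    (NonverticalLine.height_lt_iff_slope_lt hfe_height hx).2 hfe_slope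
  have hg_below {x : K} (hx : x < e.right) : g.line.height x < e.line.height x :=
    (NonverticalLine.height_lt_iff_slope_gt hge_height hx).2 hge_slope
  rcases lt_or_ge f.right e.right with hfr | hfr
  · exact ⟨f.rightPoint, Finset.mem_filter.2 ⟨(G.isEdge f hf).rightPoint_mem, ⟨hf_lt, hfr⟩,
      le_rfl, le_rfl, hf_below hf_lt⟩⟩
  have hfg {x : K} (hx : x ∈ Set.Icc e.left e.right) (hgx : g.left ≤ x) :
      f.line.height x ≤ g.line.height x :=
    PlaneSegment.height_le_of_not_crosses (G.not_crosses f hf g hg) (x := e.right)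
      ⟨⟨hfe_left.trans_le he_lt.le, hfr⟩, ⟨hg_lt.le, hge_right.ge⟩⟩
      ⟨⟨hfe_left.trans_le hx.1, hx.2.trans hfr⟩, ⟨hgx, hx.2.trans hge_right.ge⟩⟩
      ((hf_below he_lt).trans_eq hge_height.symm)
  have hg_left : e.left < g.left := by
    by_contra! hle
    exact ((hfg (Set.left_mem_Icc.2 he_lt.le) hle).trans_lt (hg_below he_lt)).ne hfe_height
  exact ⟨g.leftPoint, Finset.mem_filter.2 ⟨(G.isEdge g hg).leftPoint_mem, ⟨hg_left, hg_lt⟩,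
    hg_lt.le.trans hfr, hfg ⟨hg_left.le, hg_lt.le⟩ le_rfl, hg_below hg_lt⟩⟩

lemma height_mem_Icc_of_mem_Ioo {h : PlaneSegment K} (G : IsPlaneDrawing V E) (he : e ∈ E)
    (hf : f ∈ E) (hh : h ∈ E) {x y : K}
    (hx : x ∈ Set.Icc f.left f.right ∩ Set.Icc h.left h.right ∩ Set.Icc e.left e.right)
    (hy : y ∈ Set.Icc f.left f.right ∩ Set.Icc h.left h.right ∩ Set.Icc e.left e.right)
    (hheight : h.line.height x ∈ Set.Ioo (f.line.height x) (e.line.height x)) :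
    h.line.height y ∈ Set.Icc (f.line.height y) (e.line.height y) :=
  ⟨PlaneSegment.height_le_of_not_crosses (G.not_crosses f hf h hh) hx.1 hy.1 hheight.1,
    PlaneSegment.height_le_of_not_crosses (G.not_crosses h hh e he) ⟨hx.1.2, hx.2⟩
      ⟨hy.1.2, hy.2⟩ hheight.2⟩

/-- A segment blocking the view of `e` from `w` would start in the wedge to the left of `w`, or run
between `f` and `e` all the way to their common endpoint. -/
lemma isFirstAbove_of_leftmost (G : IsPlaneDrawing V E) (he : e ∈ E) (hf : f ∈ E)
    (hfe : f.leftPoint = e.leftPoint)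
    (hf_max : ∀ h ∈ E, h.leftPoint = e.leftPoint → h.line.slope < e.line.slope →
      h.line.slope ≤ f.line.slope)
    {w : Fin 2 → K} (hw : w ∈ wedge V f e) (hw_min : ∀ u ∈ wedge V f e, w 0 ≤ u 0) :
    IsFirstAbove E w e := by
  obtain ⟨-, hwe, hwf, hfw, hw_lt⟩ := Finset.mem_filter.1 hw
  refine ⟨hwe, hw_lt, fun h hh hwh hw_lt_h => ?_⟩
  by_contra! hhe
  have hfe_left := PlaneSegment.left_eq_of_leftPoint_eq hfe
  have hfe_height := PlaneSegment.height_left_eq_of_leftPoint_eq hfe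
  rw [hfe_left] at hfe_height
  have hfh := hfw.trans_lt hw_lt_h
  have hsqueeze {x : K} (hx : x ∈ Set.Icc e.left (w 0)) (hhx : h.left ≤ x) :
      h.line.height x ∈ Set.Icc (f.line.height x) (e.line.height x) :=
    G.height_mem_Icc_of_mem_Ioo he hf hh
      ⟨⟨⟨hfe_left.trans_le hwe.1.le, hwf⟩, Set.Ioo_subset_Icc_self hwh⟩,
        Set.Ioo_subset_Icc_self hwe⟩
      ⟨⟨⟨hfe_left.trans_le hx.1, hx.2.trans hwf⟩, ⟨hhx, hx.2.trans hwh.2.le⟩⟩,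
        ⟨hx.1, hx.2.trans hwe.2.le⟩⟩ ⟨hfh, hhe⟩
  rcases lt_or_ge e.left h.left with hleft | hleft
  · have hh_mem := (G.isEdge h hh).leftPoint_mem
    have hh_Ioo : h.left ∈ Set.Ioo e.left e.right := ⟨hleft, hwh.1.trans hwe.2⟩
    obtain ⟨hfh', hhe'⟩ := hsqueeze ⟨hleft.le, hwh.1.le⟩ le_rfl
    have hhe_ne := (G.isEdge e he).notMem_Ioo _ hh_mem |>.mt (not_not.2 hh_Ioo)
    exact (hw_min _ (Finset.mem_filter.2 ⟨hh_mem, hh_Ioo, hwh.1.le.trans hwf, hfh',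
      lt_of_le_of_ne hhe' hhe_ne⟩)).not_gt hwh.1
  · obtain ⟨hfh', hhe'⟩ := hsqueeze (Set.left_mem_Icc.2 hwe.1.le) hleft
    have heh_height : e.line.height e.left = h.line.height e.left :=
      le_antisymm (hfe_height ▸ hfh') hhe'
    have hhe_left : h.leftPoint = e.leftPoint :=
      (G.isEdge e he).leftPoint_eq_of_height_eq (G.isEdge h hh) hleft (hwe.1.trans hwh.2)
        heh_height
    have hh_slope : h.line.slope < e.line.slope :=
      (NonverticalLine.height_lt_iff_slope_lt heh_height.symm hwe.1).1 hhe
    exact (hf_max h hh hhe_left hh_slope).not_gt <|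
      (NonverticalLine.height_lt_iff_slope_lt (hfe_height.trans heh_height) hwe.1).1 hfh

lemma exists_isFirstAbove (G : IsPlaneDrawing V E) (he : e ∈ E) (hf : f ∈ E) (hg : g ∈ E)
    (hfe : f.leftPoint = e.leftPoint) (hfe_slope : f.line.slope < e.line.slope)
    (hge : g.rightPoint = e.rightPoint) (hge_slope : e.line.slope < g.line.slope) :
    ∃ w ∈ V, IsFirstAbove E w e := by
  obtain ⟨f', hf', hf'_max⟩ := Finset.exists_max_image
    {h ∈ E | h.leftPoint = e.leftPoint ∧ h.line.slope < e.line.slope} (fun h => h.line.slope)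
    ⟨f, Finset.mem_filter.2 ⟨hf, hfe, hfe_slope⟩⟩
  obtain ⟨hf', hf'e, hf'e_slope⟩ := Finset.mem_filter.1 hf'
  obtain ⟨w, hw, hw_min⟩ := Finset.exists_min_image _ (fun w => w 0)
    (G.wedge_nonempty he hf' hg hf'e hf'e_slope hge hge_slope)
  exact ⟨w, (Finset.mem_filter.1 hw).1, G.isFirstAbove_of_leftmost he hf' hf'e
    (fun h hh hhe hslope => hf'_max h (Finset.mem_filter.2 ⟨hh, hhe, hslope⟩)) hw hw_min⟩

theorem card_edges_le (G : IsPlaneDrawing V E) : #E ≤ 3 * #V := by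
  let A : Finset (PlaneSegment K) :=
    {e ∈ E | ∀ f ∈ E, f.leftPoint = e.leftPoint → e.line.slope ≤ f.line.slope}
  let B : Finset (PlaneSegment K) :=
    {e ∈ E | ∀ f ∈ E, f.rightPoint = e.rightPoint → f.line.slope ≤ e.line.slope}
  let C : Finset (PlaneSegment K) := {e ∈ E | ∃ w ∈ V, IsFirstAbove E w e}
  have hcover : E ⊆ A ∪ B ∪ C := by
    intro e he
    by_contra hn
    simp only [A, B, C, Finset.mem_union, Finset.mem_filter, not_or, he, true_and] at hn
    obtain ⟨⟨hleft, hright⟩, hseen⟩ := hn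
    push Not at hleft hright
    obtain ⟨f, hf, hfe, hfe_slope⟩ := hleft
    obtain ⟨g, hg, hge, hge_slope⟩ := hright
    exact hseen (G.exists_isFirstAbove he hf hg hfe hfe_slope hge hge_slope)
  calc #E ≤ #(A ∪ B ∪ C) := Finset.card_le_card hcover
    _ ≤ #A + #B + #C :=
      (Finset.card_union_le _ _).trans (Nat.add_le_add_right (Finset.card_union_le _ _) _)
    _ ≤ #V + #V + #V := by
      gcongr
      exacts [card_filter_lowest_left_le G.isEdge, card_filter_lowest_right_le G.isEdge,
        G.card_filter_isFirstAbove_le]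
    _ = 3 * #V := by ring

end IsPlaneDrawing

end PlaneDrawing

/-! ### Random subsets -/

section Sampling

variable {α β R : Type*} [CommRing R]

/-- The probability that a random subset of `V`, to which every element belongs independently with
probability `p`, equals `S`; meant for `S ⊆ V`, where the subtraction is not truncated. -/
def sampleWeight (p : R) (V S : Finset α) : R :=
  p ^ #S * (1 - p) ^ (#V - #S)

lemma sampleWeight_nonneg [PartialOrder R] [IsOrderedRing R] {p : R} (hp₀ : 0 ≤ p) (hp₁ : p ≤ 1)
    (V S : Finset α) : 0 ≤ sampleWeight p V S :=
  mul_nonneg (pow_nonneg hp₀ _) (pow_nonneg (sub_nonneg.2 hp₁) _)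

lemma sum_sampleWeight_superset [DecidableEq α] {V T : Finset α} (hT : T ⊆ V) (p : R) :
    ∑ S ∈ V.powerset with T ⊆ S, sampleWeight p V S = p ^ #T := by
  have hsupersets : {S ∈ V.powerset | T ⊆ S} = (V \ T).powerset.image (T ∪ ·) := by
    rw [← Finset.Icc_eq_image_powerset hT]
    ext S
    simp [and_comm]
  have hdisj {S : Finset α} (hS : S ∈ (V \ T).powerset) : Disjoint T S :=
    Finset.disjoint_of_subset_right (Finset.mem_powerset.1 hS) Finset.disjoint_sdiff
  have hweight : ∀ S ∈ (V \ T).powerset,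
      sampleWeight p V (T ∪ S) = p ^ #T * (p ^ #S * (1 - p) ^ (#(V \ T) - #S)) := by
    intro S hS
    rw [sampleWeight, Finset.card_union_of_disjoint (hdisj hS), pow_add, mul_assoc,
      Finset.card_sdiff_of_subset hT, Nat.sub_sub]
  rw [hsupersets, Finset.sum_image fun S hS S' hS' h => ?_, Finset.sum_congr rfl hweight,
    ← Finset.mul_sum, Finset.sum_pow_mul_eq_add_pow, add_sub_cancel, one_pow, mul_one]
  rw [← Finset.union_sdiff_cancel_left (hdisj hS), h, Finset.union_sdiff_cancel_left (hdisj hS')]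

lemma sum_sampleWeight_mul_card_filter [DecidableEq α] {V : Finset α} {A : Finset β}
    {T : β → Finset α} (hT : ∀ a ∈ A, T a ⊆ V) (p : R) :
    ∑ S ∈ V.powerset, sampleWeight p V S * #{a ∈ A | T a ⊆ S} = ∑ a ∈ A, p ^ #(T a) := by
  simp_rw [Finset.card_filter, Nat.cast_sum, Finset.mul_sum]
  rw [Finset.sum_comm]
  refine Finset.sum_congr rfl fun a ha => ?_
  simp [← sum_sampleWeight_superset (hT a ha) p, Finset.sum_filter]

lemma sum_sampleWeight_mul_card (V : Finset α) (p : R) :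
    ∑ S ∈ V.powerset, sampleWeight p V S * #S = #V * p := by
  have hsingletons := sum_sampleWeight_mul_card_filter (V := V) (A := V) (T := fun v => {v})
    (by simp) p
  simp only [Finset.singleton_subset_iff, Finset.card_singleton, pow_one, Finset.sum_const,
    nsmul_eq_mul] at hsingletons
  rw [← hsingletons]
  refine Finset.sum_congr rfl fun S hS => ?_
  rw [Finset.filter_mem_eq_inter, Finset.inter_eq_right.2 (Finset.mem_powerset.1 hS)]

end Sampling

/-! ### The crossing lemma -/

section CrossingLemma

variable {K : Type*} [Field K] [LinearOrder K] {V : Finset (Fin 2 → K)}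
  {E : Finset (PlaneSegment K)}

/-- The crossings among the segments `E`, as ordered pairs: every crossing is counted twice. -/
def crossings (E : Finset (PlaneSegment K)) : Finset (PlaneSegment K × PlaneSegment K) :=
  {c ∈ E ×ˢ E | c.1.Crosses c.2}

lemma mem_crossings {c : PlaneSegment K × PlaneSegment K} :
    c ∈ crossings E ↔ c.1 ∈ E ∧ c.2 ∈ E ∧ c.1.Crosses c.2 := by
  simp [crossings, and_assoc]

lemma crossings_filter_endpoints_subset (E : Finset (PlaneSegment K)) (S : Finset (Fin 2 → K)) :
    crossings {e ∈ E | e.endpoints ⊆ S} =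
      {c ∈ crossings E | c.1.endpoints ∪ c.2.endpoints ⊆ S} := by
  ext c
  simp only [mem_crossings, Finset.mem_filter, Finset.union_subset_iff]
  tauto

lemma card_crossings_le_sq_of_line_mem {L : Finset (NonverticalLine K)}
    (hE : ∀ e ∈ E, e.IsEdge V) (hL : ∀ e ∈ E, e.line ∈ L) : #(crossings E) ≤ #L ^ 2 := by
  rw [sq, ← Finset.card_product]
  refine Finset.card_le_card_of_injOn (fun c => (c.1.line, c.2.line)) (fun c hc => ?_) ?_
  · obtain ⟨h₁, h₂, -⟩ := mem_crossings.1 hc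
    exact Finset.mem_product.2 ⟨hL _ h₁, hL _ h₂⟩
  · intro c hc d hd hcd
    obtain ⟨hc₁, hc₂, hc⟩ := mem_crossings.1 hc
    obtain ⟨hd₁, hd₂, hd⟩ := mem_crossings.1 hd
    obtain ⟨hline₁, hline₂⟩ := Prod.mk.inj hcd
    exact Prod.ext_iff.2 <| hc.eq_of_line_eq hd (hE _ hc₁) (hE _ hc₂) (hE _ hd₁) (hE _ hd₂)
      hline₁ hline₂

variable [IsStrictOrderedRing K]

lemma card_edges_le_add_card_crossings (hE : ∀ e ∈ E, e.IsEdge V) :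
    #E ≤ 3 * #V + #(crossings E) := by
  have G : IsPlaneDrawing V (E \ (crossings E).image Prod.fst) := by
    refine ⟨fun e he => hE e (Finset.mem_sdiff.1 he).1, fun e he f hf hef => ?_⟩
    obtain ⟨he, he_notMem⟩ := Finset.mem_sdiff.1 he
    exact he_notMem (Finset.mem_image.2
      ⟨(e, f), mem_crossings.2 ⟨he, (Finset.mem_sdiff.1 hf).1, hef⟩, rfl⟩)
  calc #E ≤ #(E \ (crossings E).image Prod.fst) + #((crossings E).image Prod.fst) :=
        Finset.card_le_card_sdiff_add_card
    _ ≤ 3 * #V + #(crossings E) := Nat.add_le_add G.card_edges_le Finset.card_image_le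

lemma card_edges_mul_sq_le (hE : ∀ e ∈ E, e.IsEdge V) {p : ℝ} (hp₀ : 0 ≤ p) (hp₁ : p ≤ 1) :
    #E * p ^ 2 ≤ 3 * (#V * p) + #(crossings E) * p ^ 4 := by
  have hedges : ∑ S ∈ V.powerset, sampleWeight p V S * #{e ∈ E | e.endpoints ⊆ S} =
      #E * p ^ 2 := by
    rw [sum_sampleWeight_mul_card_filter fun e he => (hE e he).endpoints_subset,
      Finset.sum_congr rfl fun e he => by rw [(hE e he).card_endpoints], Finset.sum_const,
      nsmul_eq_mul]
  have hcrossings : ∑ S ∈ V.powerset, sampleWeight p V S *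
      #{c ∈ crossings E | c.1.endpoints ∪ c.2.endpoints ⊆ S} = #(crossings E) * p ^ 4 := by
    have hcard : ∀ c ∈ crossings E, #(c.1.endpoints ∪ c.2.endpoints) = 4 := fun c hc =>
      have ⟨h₁, h₂, hc⟩ := mem_crossings.1 hc
      hc.card_endpoints_union (hE _ h₁) (hE _ h₂)
    rw [sum_sampleWeight_mul_card_filter fun c hc =>
        have ⟨h₁, h₂, _⟩ := mem_crossings.1 hc
        Finset.union_subset (hE _ h₁).endpoints_subset (hE _ h₂).endpoints_subset,
      Finset.sum_congr rfl fun c hc => by rw [hcard c hc], Finset.sum_const, nsmul_eq_mul]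
  rw [← hedges, ← hcrossings, ← sum_sampleWeight_mul_card V p, Finset.mul_sum,
    ← Finset.sum_add_distrib]
  refine Finset.sum_le_sum fun S hS => ?_
  have hinduced := card_edges_le_add_card_crossings (V := S) (E := {e ∈ E | e.endpoints ⊆ S})
    fun e he => have ⟨he, heS⟩ := Finset.mem_filter.1 he
      (hE e he).of_endpoints_subset (Finset.mem_powerset.1 hS) heS
  rw [crossings_filter_endpoints_subset] at hinduced
  calc sampleWeight p V S * #{e ∈ E | e.endpoints ⊆ S}
      ≤ sampleWeight p V S * (3 * #S +
          #{c ∈ crossings E | c.1.endpoints ∪ c.2.endpoints ⊆ S}) :=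
        mul_le_mul_of_nonneg_left (mod_cast hinduced) (sampleWeight_nonneg hp₀ hp₁ V S)
    _ = _ := by ring

theorem crossing_lemma (hE : ∀ e ∈ E, e.IsEdge V) (h : 6 * #V ≤ #E) :
    #E ^ 3 ≤ 72 * #V ^ 2 * #(crossings E) := by
  obtain rfl | ⟨e₀, he₀⟩ := E.eq_empty_or_nonempty
  · simp
  have hE_pos : (0 : ℝ) < #E := Nat.cast_pos.2 (Finset.card_pos.2 ⟨e₀, he₀⟩)
  have hV_pos : (0 : ℝ) < #V :=
    Nat.cast_pos.2 (Finset.card_pos.2 ⟨_, (hE e₀ he₀).leftPoint_mem⟩)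
  -- The density `p` is chosen to make the edge term twice the vertex term.
  obtain ⟨p, hp⟩ : ∃ p : ℝ, #E * p = 6 * #V := ⟨_, mul_div_cancel₀ _ hE_pos.ne'⟩
  have hp_pos : 0 < p := pos_of_mul_pos_right (hp ▸ by positivity) hE_pos.le
  have hp_le_one : p ≤ 1 := le_of_mul_le_mul_left (by rw [hp, mul_one]; exact_mod_cast h) hE_pos
  have hsample := card_edges_mul_sq_le hE hp_pos.le hp_le_one
  have hE_le : (#E : ℝ) ≤ 2 * #(crossings E) * p ^ 2 :=
    le_of_mul_le_mul_left (by linear_combination 2 * hsample - p * hp) (pow_pos hp_pos 2)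
  have hcube : (#E : ℝ) ^ 3 ≤ 72 * (#V : ℝ) ^ 2 * #(crossings E) :=
    calc (#E : ℝ) ^ 3 = (#E : ℝ) ^ 2 * #E := by ring
      _ ≤ (#E : ℝ) ^ 2 * (2 * #(crossings E) * p ^ 2) := by gcongr
      _ = 2 * #(crossings E) * (#E * p) ^ 2 := by ring
      _ = 72 * (#V : ℝ) ^ 2 * #(crossings E) := by rw [hp]; ring
  exact_mod_cast hcube

end CrossingLemma

/-! ### Points and lines -/

section PointsAndLines

variable {K : Type*} [Field K] [LinearOrder K]

/-- The segments joining consecutive points of `P` on a line of `L`. -/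
def consecutiveSegments (P : Finset (Fin 2 → K)) (L : Finset (NonverticalLine K)) :
    Finset (PlaneSegment K) :=
  {e ∈ (L ×ˢ P ×ˢ P).image fun t => ⟨t.1, t.2.1 0, t.2.2 0⟩ | e.IsEdge P}

variable {P : Finset (Fin 2 → K)} {L : Finset (NonverticalLine K)}

lemma mem_consecutiveSegments {e : PlaneSegment K} :
    e ∈ consecutiveSegments P L ↔ e.line ∈ L ∧ e.IsEdge P := by
  refine Finset.mem_filter.trans (and_congr_left fun he => ⟨fun h => ?_, fun h => ?_⟩)
  · obtain ⟨t, ht, rfl⟩ := Finset.mem_image.1 h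
    exact (Finset.mem_product.1 ht).1
  · exact Finset.mem_image.2 ⟨(e.line, e.leftPoint, e.rightPoint), Finset.mem_product.2
      ⟨h, Finset.mem_product.2 ⟨he.leftPoint_mem, he.rightPoint_mem⟩⟩, rfl⟩

lemma exists_isEdge_leftPoint_eq {l : NonverticalLine K} {p q : Fin 2 → K} (hp : p ∈ P)
    (hq : q ∈ P) (hpl : p ∈ l) (hql : q ∈ l) (hpq : p 0 < q 0) :
    ∃ e : PlaneSegment K, e.IsEdge P ∧ e.line = l ∧ e.leftPoint = p := by
  obtain ⟨r, hr, hr_min⟩ := Finset.exists_min_image {r ∈ P | r ∈ l ∧ p 0 < r 0} (fun r => r 0)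
    ⟨q, Finset.mem_filter.2 ⟨hq, hql, hpq⟩⟩
  obtain ⟨hrP, hrl, hpr⟩ := Finset.mem_filter.1 hr
  refine ⟨⟨l, p 0, r 0⟩, ⟨hpr, ?_, ?_, ?_⟩, rfl, l.pointAt_apply_zero hpl⟩
  · exact (l.pointAt_apply_zero hpl).symm ▸ hp
  · exact (l.pointAt_apply_zero hrl).symm ▸ hrP
  · exact fun w hw hwl hwx =>
      (hr_min w (Finset.mem_filter.2 ⟨hw, hwl, hwx.1⟩)).not_gt hwx.2

lemma card_incidences_le_card_consecutiveSegments_add (P : Finset (Fin 2 → K))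
    (L : Finset (NonverticalLine K)) :
    #(incidences P L) ≤ #(consecutiveSegments P L) + #L := by
  let J := (consecutiveSegments P L).image fun e => (e.leftPoint, e.line)
  have hlast : ∀ z ∈ incidences P L \ J, ∀ w ∈ incidences P L, z.2 = w.2 → w.1 0 ≤ z.1 0 := by
    intro z hz w hw hzw
    obtain ⟨hz, hzJ⟩ := Finset.mem_sdiff.1 hz
    obtain ⟨hzP, hzL, hz⟩ := mem_incidences.1 hz
    obtain ⟨hwP, -, hw⟩ := mem_incidences.1 hw
    by_contra! hlt
    obtain ⟨e, he, heline, heleft⟩ := exists_isEdge_leftPoint_eq hzP hwP hz (hzw ▸ hw) hlt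
    exact hzJ (Finset.mem_image.2 ⟨e, mem_consecutiveSegments.2 ⟨heline ▸ hzL, he⟩,
      Prod.ext heleft heline⟩)
  have hcard_last : #(incidences P L \ J) ≤ #L := by
    refine Finset.card_le_card_of_injOn Prod.snd
      (fun z hz => (mem_incidences.1 (Finset.mem_sdiff.1 hz).1).2.1) fun z hz w hw hzw => ?_
    have hz' := (Finset.mem_sdiff.1 hz).1
    have hw' := (Finset.mem_sdiff.1 hw).1
    exact Prod.ext (NonverticalLine.eq_of_mem (mem_incidences.1 hz').2.2
      (hzw ▸ (mem_incidences.1 hw').2.2)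
      (le_antisymm (hlast w hw z hz' hzw.symm) (hlast z hz w hw' hzw))) hzw
  calc #(incidences P L) ≤ #(incidences P L \ J) + #J := Finset.card_le_card_sdiff_add_card
    _ ≤ #L + #(consecutiveSegments P L) := Nat.add_le_add hcard_last Finset.card_image_le
    _ = _ := add_comm _ _

end PointsAndLines

lemma le_mul_rpow_two_thirds {c x y : ℝ} (hc : 0 ≤ c) (hx : 0 ≤ x) (h : y ^ 3 ≤ c ^ 3 * x ^ 2) :
    y ≤ c * x ^ ((2 : ℝ) / 3) := by
  have hcube : (x ^ ((2 : ℝ) / 3)) ^ 3 = x ^ 2 := by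
    rw [← Real.rpow_natCast, ← Real.rpow_mul hx, ← Real.rpow_natCast]
    norm_num
  refine le_of_pow_le_pow_left₀ three_ne_zero (by positivity) ?_
  rwa [mul_pow, hcube]

section SzemerediTrotter

variable {K : Type*}

/-- The vertical line `x = a` in the plane over `K`. -/
def verticalLine (a : K) : Set (Fin 2 → K) :=
  {x | x 0 = a}

lemma pairwiseDisjoint_range_verticalLine :
    (Set.range (verticalLine : K → Set (Fin 2 → K))).PairwiseDisjoint id := by
  rintro _ ⟨a, rfl⟩ _ ⟨b, rfl⟩ hab
  refine Set.disjoint_left.2 fun x (hxa : x 0 = a) (hxb : x 0 = b) => hab ?_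
  rw [← hxa, ← hxb]

variable [Field K]

lemma zeroSet_mem_range_verticalLine_or_coe {a b : K} (hab : a ≠ 0 ∨ b ≠ 0) (c : K) :
    {x : Fin 2 → K | a * x 0 + b * x 1 + c = 0} ∈ Set.range (verticalLine (K := K)) ∨
      {x : Fin 2 → K | a * x 0 + b * x 1 + c = 0} ∈
        Set.range ((↑) : NonverticalLine K → Set (Fin 2 → K)) := by
  rcases eq_or_ne b 0 with rfl | hb
  · have ha : a ≠ 0 := by simpa using hab
    refine Or.inl ⟨-c / a, Set.ext fun x => ?_⟩
    change x 0 = -c / a ↔ a * x 0 + 0 * x 1 + c = 0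
    rw [eq_div_iff ha]
    constructor <;> intro h <;> linear_combination h
  · refine Or.inr ⟨⟨-a / b, -c / b⟩, Set.ext fun x => ?_⟩
    change x 1 = -a / b * x 0 + -c / b ↔ a * x 0 + b * x 1 + c = 0
    rw [div_mul_eq_mul_div, ← add_div, eq_div_iff hb]
    constructor <;> intro h <;> linear_combination h

lemma exists_card_incidences_le_card_add (P : Finset (Fin 2 → K)) {L : Finset (Set (Fin 2 → K))}
    (hL : ∀ l ∈ L, ∃ a b c : K, (a ≠ 0 ∨ b ≠ 0) ∧ l = {x | a * x 0 + b * x 1 + c = 0}) :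
    ∃ N : Finset (NonverticalLine K), #N ≤ #L ∧ #(incidences P L) ≤ #P + #(incidences P N) := by
  let toSet : NonverticalLine K → Set (Fin 2 → K) := (↑)
  let V : Finset (Set (Fin 2 → K)) := {l ∈ L | l ∉ Set.range toSet}
  let N : Finset (NonverticalLine K) := L.preimage toSet SetLike.coe_injective.injOn
  have hsplit : L = V ∪ N.image toSet := by
    rw [Finset.image_preimage, Finset.union_comm, Finset.filter_union_filter_not_eq]
  have hV : (V : Set (Set (Fin 2 → K))).PairwiseDisjoint id := by
    refine pairwiseDisjoint_range_verticalLine.subset fun l hl => ?_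
    obtain ⟨hl, hl_vertical⟩ := Finset.mem_filter.1 hl
    obtain ⟨a, b, c, hab, rfl⟩ := hL l hl
    exact (zeroSet_mem_range_verticalLine_or_coe hab c).resolve_right hl_vertical
  refine ⟨N, (Finset.card_preimage ..).trans_le (Finset.card_filter_le _ _), ?_⟩
  calc #(incidences P L) ≤ #(incidences P V) + #(incidences P (N.image toSet)) :=
        hsplit ▸ card_incidences_union_le P V (N.image toSet)
    _ ≤ #P + #(incidences P N) := add_le_add (card_incidences_le_of_pairwiseDisjoint hV)
        (card_incidences_image_coe_le P N)

variable [LinearOrder K] [IsStrictOrderedRing K]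

lemma card_consecutiveSegments_le (P : Finset (Fin 2 → K)) (L : Finset (NonverticalLine K)) :
    (#(consecutiveSegments P L) : ℝ) ≤ 5 * ((#P : ℝ) * #L) ^ ((2 : ℝ) / 3) + 6 * #P := by
  have hedge : ∀ e ∈ consecutiveSegments P L, e.IsEdge P := fun e he =>
    (mem_consecutiveSegments.1 he).2
  have hcrossings : #(crossings (consecutiveSegments P L)) ≤ #L ^ 2 :=
    card_crossings_le_sq_of_line_mem hedge fun e he => (mem_consecutiveSegments.1 he).1
  rcases le_total #(consecutiveSegments P L) (6 * #P) with h | h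
  · have h' : (#(consecutiveSegments P L) : ℝ) ≤ 6 * #P := mod_cast h
    exact h'.trans (le_add_of_nonneg_left (by positivity))
  · have hcube : #(consecutiveSegments P L) ^ 3 ≤ 5 ^ 3 * (#P * #L) ^ 2 :=
      calc #(consecutiveSegments P L) ^ 3
          ≤ 72 * #P ^ 2 * #(crossings (consecutiveSegments P L)) := crossing_lemma hedge h
        _ ≤ 125 * #P ^ 2 * #L ^ 2 := by gcongr; norm_num
        _ = 5 ^ 3 * (#P * #L) ^ 2 := by ring
    exact (le_mul_rpow_two_thirds (by norm_num) (by positivity) (mod_cast hcube)).trans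
      (le_add_of_nonneg_right (by positivity))

theorem card_incidences_nonverticalLine_le (P : Finset (Fin 2 → K))
    (L : Finset (NonverticalLine K)) :
    (#(incidences P L) : ℝ) ≤ 5 * ((#P : ℝ) * #L) ^ ((2 : ℝ) / 3) + 6 * #P + #L :=
  calc (#(incidences P L) : ℝ) ≤ #(consecutiveSegments P L) + #L :=
        mod_cast card_incidences_le_card_consecutiveSegments_add P L
    _ ≤ _ := add_le_add_left (card_consecutiveSegments_le P L) _

theorem szemeredi_trotter_general (P : Finset (Fin 2 → K)) (L : Finset (Set (Fin 2 → K)))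
    (hL : ∀ l ∈ L, ∃ a b c : K, (a ≠ 0 ∨ b ≠ 0) ∧ l = {x | a * x 0 + b * x 1 + c = 0}) :
    (#(incidences P L) : ℝ) ≤ 7 * (((#P : ℝ) * #L) ^ ((2 : ℝ) / 3) + #P + #L) := by
  obtain ⟨N, hN, hPL⟩ := exists_card_incidences_le_card_add P hL
  calc (#(incidences P L) : ℝ) ≤ #P + #(incidences P N) := mod_cast hPL
    _ ≤ #P + (5 * ((#P : ℝ) * #N) ^ ((2 : ℝ) / 3) + 6 * #P + #N) := by
        gcongr; exact card_incidences_nonverticalLine_le P N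
    _ ≤ #P + (5 * ((#P : ℝ) * #L) ^ ((2 : ℝ) / 3) + 6 * #P + #L) := by gcongr
    _ ≤ 7 * (((#P : ℝ) * #L) ^ ((2 : ℝ) / 3) + #P + #L) := by
        have hpow : 0 ≤ ((#P : ℝ) * #L) ^ ((2 : ℝ) / 3) := by positivity
        linarith [Nat.cast_nonneg (α := ℝ) #L]

end SzemerediTrotter

theorem szemeredi_trotter :
    ∃ c : ℝ, 0 < c ∧ ∀ (P : Finset (Fin 2 → ℝ)) (L : Finset (Set (Fin 2 → ℝ))),
      (∀ l ∈ L, IsLineR l) →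
      (incidencesR P L : ℝ) ≤
        c * (((P.card : ℝ) * (L.card : ℝ)) ^ ((2 : ℝ) / 3) + (P.card : ℝ) + (L.card : ℝ)) :=
  ⟨7, by norm_num, szemeredi_trotter_general⟩
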